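/- Let D be a totally unimodular real m×n matrix such that no index i is a loop (De_i ≠ 0 for every i) and no index i is a coloop (e_i ∉ B for every i), and suppose that 2x ∈ B_I for every x ∈ B_I^#. Then every diagonal entry of the orthogonal projection matrix P onto the cut space B equals 1/2. -/

import Mathlib

open Matrix

variable {m n : ℕ}

/-- The cycle space `Z = ker D`. -/
def cycleSpace (D : Matrix (Fin m) (Fin n) ℝ) : Submodule ℝ (Fin n → ℝ) :=
  LinearMap.ker D.mulVecLin

/-- The cut space `B = Z^⊥`, the orthogonal complement of the cycle space with respect to the
standard inner product on `ℝⁿ`. -/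
def cutSpace (D : Matrix (Fin m) (Fin n) ℝ) : Submodule ℝ (Fin n → ℝ) where
  carrier := {x | ∀ z ∈ cycleSpace D, x ⬝ᵥ z = 0}
  add_mem' := by
    intro a b ha hb z hz
    simp [add_dotProduct, ha z hz, hb z hz]
  zero_mem' := by
    intro z hz
    simp
  smul_mem' := by
    intro c a ha z hz
    simp [smul_dotProduct, ha z hz]

/-- The cycle lattice `Z_I = Z ∩ ℤⁿ`. -/
def cycleLattice (D : Matrix (Fin m) (Fin n) ℝ) : Set (Fin n → ℝ) :=
  {x | x ∈ cycleSpace D ∧ ∀ i, ∃ k : ℤ, x i = (k : ℝ)}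

/-- The cut lattice `B_I = B ∩ ℤⁿ`. -/
def cutLattice (D : Matrix (Fin m) (Fin n) ℝ) : Set (Fin n → ℝ) :=
  {x | x ∈ cutSpace D ∧ ∀ i, ∃ k : ℤ, x i = (k : ℝ)}

/-- The dual lattice `B_I^# = {x ∈ B : ⟨x,b⟩ ∈ ℤ for all b ∈ B_I}`. -/
def dualLattice (D : Matrix (Fin m) (Fin n) ℝ) : Set (Fin n → ℝ) :=
  {x | x ∈ cutSpace D ∧ ∀ b ∈ cutLattice D, ∃ k : ℤ, x ⬝ᵥ b = (k : ℝ)}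

/-- `P` is the orthogonal projection matrix onto the cut space `B`: `Px ∈ B` and
`x - Px ∈ B^⊥ = Z` for every `x`. -/
def IsCutProjection (D : Matrix (Fin m) (Fin n) ℝ) (P : Matrix (Fin n) (Fin n) ℝ) : Prop :=
  ∀ x : Fin n → ℝ, P.mulVec x ∈ cutSpace D ∧ x - P.mulVec x ∈ cycleSpace D

/-!
The vector `p = P eᵢ` pairs integrally with every integral cut, so it lies in the dual lattice and
`2 Pᵢᵢ = (2p)ᵢ` is an integer. On the other hand `p ⟂ eᵢ - p` gives `pᵢ = ‖p‖²` and
`1 - pᵢ = ‖eᵢ - p‖²`. Since `i` is neither a loop nor a coloop, both vectors are nonzero, hence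
`0 < 2 Pᵢᵢ < 2`.
-/

section DotProduct

variable {ι R : Type*} [Fintype ι] [Ring R]

theorem exists_intCast_eq_dotProduct {x y : ι → R} (hx : ∀ i, ∃ k : ℤ, x i = k)
    (hy : ∀ i, ∃ k : ℤ, y i = k) : ∃ k : ℤ, x ⬝ᵥ y = k := by
  choose a ha using hx
  choose b hb using hy
  exact ⟨a ⬝ᵥ b, by simp [dotProduct, ha, hb]⟩

variable [DecidableEq ι] [LinearOrder R] [IsStrictOrderedRing R] {p : ι → R} {i : ι}

theorem apply_pos_of_dotProduct_single_sub_eq_zero (h : p ⬝ᵥ (Pi.single i 1 - p) = 0)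
    (hp : p ≠ 0) : 0 < p i := by
  have hself : p i = p ⬝ᵥ p := by
    rwa [dotProduct_sub, dotProduct_single_one, sub_eq_zero] at h
  have hnonneg : 0 ≤ p ⬝ᵥ p := Fintype.sum_nonneg fun j ↦ mul_self_nonneg (p j)
  rw [hself]
  exact hnonneg.lt_of_ne' (dotProduct_self_eq_zero.not.mpr hp)

theorem apply_lt_one_of_dotProduct_single_sub_eq_zero (h : p ⬝ᵥ (Pi.single i 1 - p) = 0)
    (hp : p ≠ Pi.single i 1) : p i < 1 := by
  -- The hypothesis is symmetric under exchanging `p` and `eᵢ - p`.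
  have hcompl : (Pi.single i 1 - p) ⬝ᵥ (Pi.single i 1 - (Pi.single i 1 - p)) = 0 := by
    rwa [sub_sub_cancel, sub_dotProduct, single_one_dotProduct, ← dotProduct_single_one p i,
      ← dotProduct_sub]
  simpa using apply_pos_of_dotProduct_single_sub_eq_zero hcompl (sub_ne_zero.mpr hp.symm)

end DotProduct

namespace IsCutProjection

variable {D : Matrix (Fin m) (Fin n) ℝ} {P : Matrix (Fin n) (Fin n) ℝ}

theorem dotProduct_mulVec_of_mem_cutSpace (hP : IsCutProjection D P) {b : Fin n → ℝ}
    (hb : b ∈ cutSpace D) (x : Fin n → ℝ) : b ⬝ᵥ P *ᵥ x = b ⬝ᵥ x := by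
  have horth : b ⬝ᵥ (x - P *ᵥ x) = 0 := hb _ (hP x).2
  rw [dotProduct_sub, sub_eq_zero] at horth
  exact horth.symm

theorem mulVec_mem_dualLattice (hP : IsCutProjection D P) {x : Fin n → ℝ}
    (hx : ∀ i, ∃ k : ℤ, x i = k) : P *ᵥ x ∈ dualLattice D := by
  refine ⟨(hP x).1, fun b ⟨hb, hb_int⟩ ↦ ?_⟩
  rw [dotProduct_comm, hP.dotProduct_mulVec_of_mem_cutSpace hb]
  exact exists_intCast_eq_dotProduct hb_int hx

theorem col_mem_dualLattice (hP : IsCutProjection D P) (i : Fin n) :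
    P.col i ∈ dualLattice D := by
  rw [← mulVec_single_one]
  exact hP.mulVec_mem_dualLattice fun j ↦ ⟨if j = i then 1 else 0, by simp [Pi.single_apply]⟩

theorem col_mem_cutSpace (hP : IsCutProjection D P) (i : Fin n) : P.col i ∈ cutSpace D :=
  (hP.col_mem_dualLattice i).1

theorem single_sub_col_mem_cycleSpace (hP : IsCutProjection D P) (i : Fin n) :
    Pi.single i 1 - P.col i ∈ cycleSpace D := by
  simpa only [mulVec_single_one] using (hP (Pi.single i 1)).2

theorem col_dotProduct_single_sub_col (hP : IsCutProjection D P) (i : Fin n) :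
    P.col i ⬝ᵥ (Pi.single i 1 - P.col i) = 0 :=
  hP.col_mem_cutSpace i _ (hP.single_sub_col_mem_cycleSpace i)

theorem diag_pos (hP : IsCutProjection D P) {i : Fin n}
    (hloop : D *ᵥ Pi.single i 1 ≠ 0) : 0 < P i i := by
  refine apply_pos_of_dotProduct_single_sub_eq_zero (p := P.col i)
    (hP.col_dotProduct_single_sub_col i) fun hcol ↦ hloop ?_
  have hcycle := hP.single_sub_col_mem_cycleSpace i
  rwa [hcol, sub_zero] at hcycle

theorem diag_lt_one (hP : IsCutProjection D P) {i : Fin n}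
    (hcoloop : Pi.single i 1 ∉ cutSpace D) : P i i < 1 :=
  apply_lt_one_of_dotProduct_single_sub_eq_zero (p := P.col i)
    (hP.col_dotProduct_single_sub_col i) fun hcol ↦ hcoloop (hcol ▸ hP.col_mem_cutSpace i)

theorem exists_intCast_eq_mul_apply (hP : IsCutProjection D P) {c : ℝ}
    (hc : ∀ x ∈ dualLattice D, c • x ∈ cutLattice D) (i j : Fin n) :
    ∃ k : ℤ, c * P i j = k :=
  (hc _ (hP.col_mem_dualLattice j)).2 i

end IsCutProjection

theorem stmt7_general {D : Matrix (Fin m) (Fin n) ℝ} {P : Matrix (Fin n) (Fin n) ℝ}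
    (hP : IsCutProjection D P) (hexp : ∀ x ∈ dualLattice D, (2 : ℝ) • x ∈ cutLattice D)
    {i : Fin n} (hloop : D *ᵥ Pi.single i 1 ≠ 0) (hcoloop : Pi.single i 1 ∉ cutSpace D) :
    P i i = 1 / 2 := by
  obtain ⟨k, hk⟩ := hP.exists_intCast_eq_mul_apply hexp i i
  have hpos : 0 < k := by
    have : (0 : ℝ) < k := by linarith [hP.diag_pos hloop]
    exact_mod_cast this
  have hlt : k < 2 := by
    have : (k : ℝ) < 2 := by linarith [hP.diag_lt_one hcoloop]
    exact_mod_cast this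
  obtain rfl : k = 1 := by lia
  rw [Int.cast_one] at hk
  linarith

/-- if `D` is totally unimodular with no loops and no coloops, and `2x ∈ B_I` for
all `x ∈ B_I^#`, then every diagonal entry of the orthogonal projection onto the cut space
equals `1/2`. -/
theorem stmt7 (m n : ℕ) (D : Matrix (Fin m) (Fin n) ℝ)
    (hTU : D.IsTotallyUnimodular)
    (hloop : ∀ i : Fin n, D.mulVec (Pi.single i (1 : ℝ)) ≠ 0)
    (hcoloop : ∀ i : Fin n, Pi.single i (1 : ℝ) ∉ cutSpace D)
    (hexp : ∀ x ∈ dualLattice D, (2 : ℝ) • x ∈ cutLattice D)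
    (P : Matrix (Fin n) (Fin n) ℝ) (hP : IsCutProjection D P) :
    ∀ i : Fin n, P i i = 1/2 :=
  fun i ↦ stmt7_general hP hexp (hloop i) (hcoloop i)
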